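/- arXiv:1312.6323 — 2 statements merged into one kernel-verified Lean document; each statement's English description precedes it below -/
import Mathlib

section
/- Let S be a separated C-structure with interpretation interp, Rules a rule system over (ι, κ), and GS : κ → Set S, GA : κ → Set P.M corresponding prior interpretations. Let ΦS be the operator induced by Rules relative to interp and GS, and ΦA the operator induced by Rules relative to the canonical structure mkA on P.M and GA. Then for every i : ι, every hyper-term t ∈ (lfp ΦA) i, and every a ∈ S such that t is a decomposition of a, one has a ∈ (lfp ΦS) i. -/
open PFunctor

/-- The polynomial functor of a constructor vocabulary `C` with arities `arity`.
Hyper-terms over `C` are the elements of `(PF C arity).M`. -/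
def PF (C : Type) (arity : C → ℕ) : PFunctor := ⟨C, fun c => Fin (arity c)⟩

/-- A `C`-structure `interp` on `S` is *separated* if each constructor is interpreted
injectively and distinct constructors have disjoint ranges. -/
def Separated {C : Type} {arity : C → ℕ} {S : Type*}
    (interp : ∀ c : C, (Fin (arity c) → S) → S) : Prop :=
  (∀ c, Function.Injective (interp c)) ∧
    ∀ c d, c ≠ d → Disjoint (Set.range (interp c)) (Set.range (interp d))

/-- A decomposition relation between hyper-terms and elements of a `C`-structure. -/
def IsDecompRel {C : Type} {arity : C → ℕ} {S : Type*}
    (interp : ∀ c : C, (Fin (arity c) → S) → S)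
    (R : (PF C arity).M → S → Prop) : Prop :=
  ∀ t a, R t a → ∃ (c : C) (f : Fin (arity c) → (PF C arity).M) (b : Fin (arity c) → S),
    t = PFunctor.M.mk ⟨c, f⟩ ∧ a = interp c b ∧ ∀ i, R (f i) (b i)

/-- A hyper-term `t` is a decomposition of `a : S` if `R t a` for some
decomposition relation `R`. -/
def IsDecomposition {C : Type} {arity : C → ℕ} {S : Type*}
    (interp : ∀ c : C, (Fin (arity c) → S) → S)
    (t : (PF C arity).M) (a : S) : Prop :=
  ∃ R, IsDecompRel interp R ∧ R t a

/-- The canonical `C`-structure on hyper-terms. -/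
def mkA {C : Type} {arity : C → ℕ} (c : C) (f : Fin (arity c) → (PF C arity).M) :
    (PF C arity).M :=
  PFunctor.M.mk ⟨c, f⟩

/-- The monotone operator on `ι → Set S` induced by a rule system `Rules` relative to
a `C`-structure `interp` on `S` and prior interpretations `G : κ → Set S`. -/
def ruleOp {C : Type} {arity : C → ℕ} {S : Type*} {ι κ : Type*}
    (interp : ∀ c : C, (Fin (arity c) → S) → S)
    (Rules : Set (Σ _ : ι, Σ c : C, Fin (arity c) → ι ⊕ κ))
    (G : κ → Set S) : (ι → Set S) →o (ι → Set S) where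
  toFun X i :=
    {a | ∃ r ∈ Rules, r.1 = i ∧ ∃ b : Fin (arity r.2.1) → S,
      a = interp r.2.1 b ∧ ∀ j,
        (∀ i', r.2.2 j = Sum.inl i' → b j ∈ X i') ∧
        (∀ k, r.2.2 j = Sum.inr k → b j ∈ G k)}
  monotone' := by
    intro X Y hXY i a ha
    obtain ⟨r, hr, hi, b, hab, hj⟩ := ha
    exact ⟨r, hr, hi, b, hab, fun j =>
      ⟨fun i' h => hXY i' ((hj j).1 i' h), (hj j).2⟩⟩

/-- Prior interpretations `GS` on `S` and `GA` on hyper-terms correspond. -/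
def Corresponds {C : Type} {arity : C → ℕ} {S : Type*} {κ : Type*}
    (interp : ∀ c : C, (Fin (arity c) → S) → S)
    (GS : κ → Set S) (GA : κ → Set (PF C arity).M) : Prop :=
  (∀ k, ∀ a ∈ GS k, ∃ t, IsDecomposition interp t a ∧ t ∈ GA k) ∧
  (∀ k (t : (PF C arity).M) (a : S), t ∈ GA k → IsDecomposition interp t a → a ∈ GS k)

/-!
Decomposability is itself a decomposition relation, and `PFunctor.M.mk` is injective, so a
decomposition of `a` with root `c` exhibits `a` as `interp c b` with the children decomposing
the `b j`. Hence a rule applied to hyper-terms can be replayed on the elements they decompose.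
It follows that the hyper-terms which decompose only elements of the least fixed point over `S`
form a pre-fixed point of the operator on hyper-terms, and so contain its least fixed point.
-/

section

variable {C : Type} {arity : C → ℕ} {S : Type*} {ι κ : Type*}
  {interp : ∀ c : C, (Fin (arity c) → S) → S}

theorem isDecompRel_isDecomposition : IsDecompRel interp (IsDecomposition interp) := by
  rintro t a ⟨R, hR, hta⟩
  obtain ⟨c, f, b, ht, ha, hfb⟩ := hR t a hta
  exact ⟨c, f, b, ht, ha, fun j => ⟨R, hR, hfb j⟩⟩

theorem mkA_injective (c : C) : Function.Injective (mkA (arity := arity) c) :=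
  fun _ _ h => eq_of_heq (Sigma.mk.inj (PFunctor.M.mk_inj h)).2

theorem IsDecomposition.exists_of_mkA {c : C} {f : Fin (arity c) → (PF C arity).M} {a : S}
    (h : IsDecomposition interp (mkA c f) a) :
    ∃ b, a = interp c b ∧ ∀ j, IsDecomposition interp (f j) (b j) := by
  obtain ⟨c', f', b, hmk, ha, hfb⟩ := isDecompRel_isDecomposition _ _ h
  obtain rfl : c = c' := congrArg Sigma.fst (PFunctor.M.mk_inj hmk)
  obtain rfl : f = f' := mkA_injective c hmk
  exact ⟨b, ha, hfb⟩

variable (interp) in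
/-- The hyper-terms that decompose only elements of `X`, including those that decompose nothing.
It pulls subsets of `S` back to hyper-terms, where they can be compared with a least fixed point. -/
def decompositionCore (X : Set S) : Set (PF C arity).M :=
  SetRel.core {p | IsDecomposition interp p.1 p.2} X

variable {Rules : Set (Σ _ : ι, Σ c : C, Fin (arity c) → ι ⊕ κ)}
  {GS : κ → Set S} {GA : κ → Set (PF C arity).M}

theorem ruleOp_decompositionCore_le
    (hG : ∀ k, GA k ⊆ decompositionCore interp (GS k)) (X : ι → Set S) :
    ruleOp mkA Rules GA (fun i => decompositionCore interp (X i)) ≤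
      fun i => decompositionCore interp (ruleOp interp Rules GS X i) := by
  rintro i _ ⟨r, hr, hri, f, rfl, hf⟩ a hdecomp
  obtain ⟨b, ha, hfb⟩ := IsDecomposition.exists_of_mkA hdecomp
  exact ⟨r, hr, hri, b, ha, fun j =>
    ⟨fun i' hj => (hf j).1 i' hj (hfb j), fun k hj => hG k ((hf j).2 k hj) (hfb j)⟩⟩

theorem lfp_ruleOp_le_decompositionCore
    (hG : ∀ k, GA k ⊆ decompositionCore interp (GS k)) :
    OrderHom.lfp (ruleOp mkA Rules GA) ≤
      fun i => decompositionCore interp (OrderHom.lfp (ruleOp interp Rules GS) i) := by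
  apply OrderHom.lfp_le
  simpa only [OrderHom.map_lfp] using
    ruleOp_decompositionCore_le (Rules := Rules) hG (OrderHom.lfp (ruleOp interp Rules GS))

end

theorem mem_lfp_of_decomposition_general {C : Type} {arity : C → ℕ} {S : Type*} {ι κ : Type*}
    (interp : ∀ c : C, (Fin (arity c) → S) → S)
    (Rules : Set (Σ _ : ι, Σ c : C, Fin (arity c) → ι ⊕ κ))
    (GS : κ → Set S) (GA : κ → Set (PF C arity).M)
    (hG : ∀ k (t : (PF C arity).M) (a : S), t ∈ GA k → IsDecomposition interp t a → a ∈ GS k) :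
    ∀ i : ι, ∀ t ∈ OrderHom.lfp (ruleOp (mkA (arity := arity)) Rules GA) i,
      ∀ a : S, IsDecomposition interp t a →
        a ∈ OrderHom.lfp (ruleOp interp Rules GS) i :=
  fun i _ ht _ hdecomp =>
    lfp_ruleOp_le_decompositionCore (fun k t ht a => hG k t a ht) i ht hdecomp

/-- Inductive types, converse direction: any element whose decomposition lies in the
least fixed point over hyper-terms itself lies in the least fixed point over `S`. -/
theorem mem_lfp_of_decomposition {C : Type} [Fintype C] {arity : C → ℕ} {S : Type*}
    {ι κ : Type*}
    (interp : ∀ c : C, (Fin (arity c) → S) → S) (hsep : Separated interp)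
    (Rules : Set (Σ _ : ι, Σ c : C, Fin (arity c) → ι ⊕ κ))
    (GS : κ → Set S) (GA : κ → Set (PF C arity).M)
    (hcorr : Corresponds interp GS GA) :
    ∀ i : ι, ∀ t ∈ OrderHom.lfp (ruleOp (mkA (arity := arity)) Rules GA) i,
      ∀ a : S, IsDecomposition interp t a →
        a ∈ OrderHom.lfp (ruleOp interp Rules GS) i :=
  mem_lfp_of_decomposition_general interp Rules GS GA hcorr.2
end

section
/- Let S and Q be separated C-structures, Rules a rule system over (ι, κ), and GS : κ → Set S, GQ : κ → Set Q prior interpretations each corresponding to the same GA : κ → Set P.M. Let ΦS and ΦQ be the operators induced by Rules relative to S with GS and to Q with GQ respectively. If a hyper-term t is a decomposition of a ∈ S and also a decomposition of b ∈ Q, then for every i : ι, a ∈ (gfp ΦS) i if and only if b ∈ (gfp ΦQ) i. -/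
open PFunctor

/-!
Both fixed points are compared with the greatest fixed point of the same rules on hyper-terms: if
`t` is a decomposition of `a`, then `a` has the coinductive type `i` exactly when `t` does. This is
an instance of transport along a bisimulation of `C`-structures. In a separated structure an
element is built in only one way, so a rule deriving one of two bisimilar elements also derives the
other, with bisimilar arguments, and coinduction applies. For the prior types the transport
needs an element of a separated structure to have at most one decomposition; this holds because
two decompositions of the same element are bisimilar hyper-terms.
-/

section Bisimulation

variable {C : Type} {arity : C → ℕ} {S Q U : Type*} {ι κ : Type*}
  {interpS : ∀ c : C, (Fin (arity c) → S) → S} {interpQ : ∀ c : C, (Fin (arity c) → Q) → Q}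
  {interpU : ∀ c : C, (Fin (arity c) → U) → U}

theorem Separated.injective_sigma (hsep : Separated interpS) :
    Function.Injective fun p : Σ c : C, Fin (arity c) → S => interpS p.1 p.2 := by
  rintro ⟨c, x⟩ ⟨d, y⟩ (h : interpS c x = interpS d y)
  obtain rfl : c = d := by
    by_contra hne
    exact Set.disjoint_left.mp (hsep.2 c d hne) ⟨x, rfl⟩ ⟨y, h.symm⟩
  rw [hsep.1 c h]

theorem separated_mkA : Separated (mkA (arity := arity)) := by
  refine ⟨fun c f g h => ?_, fun c d hne => Set.disjoint_left.mpr ?_⟩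
  · exact sigma_mk_injective (M.mk_inj h)
  · rintro _ ⟨f, rfl⟩ ⟨g, h⟩
    exact hne (congrArg Sigma.fst (M.mk_inj h)).symm

/-- A bisimulation between two `C`-structures: related elements are values of the same constructor
at related arguments. Decomposition relations are the bisimulations from the canonical structure
`mkA` on hyper-terms, which lets decompositions and equality of hyper-terms be treated together. -/
def IsBisim (interpS : ∀ c : C, (Fin (arity c) → S) → S)
    (interpQ : ∀ c : C, (Fin (arity c) → Q) → Q) (R : S → Q → Prop) : Prop :=
  ∀ a b, R a b → ∃ (c : C) (x : Fin (arity c) → S) (y : Fin (arity c) → Q),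
    a = interpS c x ∧ b = interpQ c y ∧ ∀ j, R (x j) (y j)

namespace IsBisim

protected theorem flip {R : S → Q → Prop} (hR : IsBisim interpS interpQ R) :
    IsBisim interpQ interpS (flip R) := by
  intro b a hab
  obtain ⟨c, x, y, ha, hb, hxy⟩ := hR a b hab
  exact ⟨c, y, x, hb, ha, hxy⟩

theorem comp (hsep : Separated interpQ) {R : S → Q → Prop} {T : Q → U → Prop}
    (hR : IsBisim interpS interpQ R) (hT : IsBisim interpQ interpU T) :
    IsBisim interpS interpU (Relation.Comp R T) := by
  rintro a u ⟨b, hab, hbu⟩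
  obtain ⟨c, x, y, ha, hb, hxy⟩ := hR a b hab
  obtain ⟨d, y', z, hb', hu, hyz⟩ := hT b u hbu
  cases hsep.injective_sigma (a₁ := ⟨c, y⟩) (a₂ := ⟨d, y'⟩) (hb.symm.trans hb')
  exact ⟨c, x, z, ha, hu, fun j => ⟨y j, hxy j, hyz j⟩⟩

theorem eq_of_mkA {R : (PF C arity).M → (PF C arity).M → Prop} (hR : IsBisim mkA mkA R)
    {t u : (PF C arity).M} (htu : R t u) : t = u := by
  refine M.bisim R (fun t u htu => ?_) t u htu
  obtain ⟨c, f, g, rfl, rfl, hfg⟩ := hR t u htu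
  exact ⟨c, f, g, M.dest_mk _, M.dest_mk _, hfg⟩

variable {Rules : Set (Σ _ : ι, Σ c : C, Fin (arity c) → ι ⊕ κ)} {GS : κ → Set S} {GQ : κ → Set Q}
  {R : S → Q → Prop}

theorem mem_ruleOp (hR : IsBisim interpS interpQ R) (hsep : Separated interpS)
    (hG : ∀ k a b, R a b → a ∈ GS k → b ∈ GQ k) {X : ι → Set S} {Y : ι → Set Q}
    (hXY : ∀ i a b, R a b → a ∈ X i → b ∈ Y i) {a : S} {b : Q} (hab : R a b) {i : ι}
    (ha : a ∈ ruleOp interpS Rules GS X i) : b ∈ ruleOp interpQ Rules GQ Y i := by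
  obtain ⟨⟨_, c, q⟩, hrule, hi, x, hax, hx⟩ := ha
  obtain ⟨d, x', y, hax', hby, hxy⟩ := hR a b hab
  cases hsep.injective_sigma (a₁ := ⟨c, x⟩) (a₂ := ⟨d, x'⟩) (hax.symm.trans hax')
  exact ⟨_, hrule, hi, y, hby, fun j =>
    ⟨fun i' hq => hXY i' _ _ (hxy j) ((hx j).1 i' hq),
      fun k hq => hG k _ _ (hxy j) ((hx j).2 k hq)⟩⟩

theorem mem_gfp_ruleOp (hR : IsBisim interpS interpQ R) (hsep : Separated interpS)
    (hG : ∀ k a b, R a b → a ∈ GS k → b ∈ GQ k) {a : S} {b : Q} (hab : R a b) {i : ι}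
    (ha : a ∈ (ruleOp interpS Rules GS).gfp i) : b ∈ (ruleOp interpQ Rules GQ).gfp i := by
  let image : ι → Set Q := fun i => {b | ∃ a, R a b ∧ a ∈ (ruleOp interpS Rules GS).gfp i}
  have image_le : image ≤ ruleOp interpQ Rules GQ image := by
    rintro i b ⟨a, hab, ha⟩
    rw [← OrderHom.map_gfp] at ha
    exact hR.mem_ruleOp (Y := image) hsep hG (fun _ a _ hab ha => ⟨a, hab, ha⟩) hab ha
  exact OrderHom.le_gfp _ image_le i ⟨a, hab, ha⟩

end IsBisim

end Bisimulation

section Decomposition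

variable {C : Type} {arity : C → ℕ} {S : Type*} {ι κ : Type*}
  {interp : ∀ c : C, (Fin (arity c) → S) → S} {GS : κ → Set S} {GA : κ → Set (PF C arity).M}
  {t : (PF C arity).M} {a : S}

theorem isBisim_isDecomposition : IsBisim mkA interp (IsDecomposition interp) := by
  rintro t a ⟨R, hR, hta⟩
  obtain ⟨c, f, x, ht, ha, hfx⟩ := hR t a hta
  exact ⟨c, f, x, ht, ha, fun j => ⟨R, hR, hfx j⟩⟩

theorem Separated.leftUnique_isDecomposition (hsep : Separated interp) :
    Relator.LeftUnique (IsDecomposition interp) := fun _ _ a ht hu =>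
  (isBisim_isDecomposition.comp hsep isBisim_isDecomposition.flip).eq_of_mkA ⟨a, ht, hu⟩

theorem Corresponds.mem_iff (hcorr : Corresponds interp GS GA) (hsep : Separated interp)
    (hta : IsDecomposition interp t a) (k : κ) : a ∈ GS k ↔ t ∈ GA k := by
  refine ⟨fun ha => ?_, fun ht => hcorr.2 k t a ht hta⟩
  obtain ⟨u, hua, hu⟩ := hcorr.1 k a ha
  rwa [hsep.leftUnique_isDecomposition hta hua]

theorem IsDecomposition.mem_gfp_ruleOp_iff (hta : IsDecomposition interp t a)
    (hsep : Separated interp) (hcorr : Corresponds interp GS GA)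
    (Rules : Set (Σ _ : ι, Σ c : C, Fin (arity c) → ι ⊕ κ)) (i : ι) :
    a ∈ (ruleOp interp Rules GS).gfp i ↔ t ∈ (ruleOp mkA Rules GA).gfp i :=
  ⟨isBisim_isDecomposition.flip.mem_gfp_ruleOp hsep
      (fun k _ _ h => (hcorr.mem_iff hsep h k).mp) hta,
    isBisim_isDecomposition.mem_gfp_ruleOp separated_mkA
      (fun k _ _ h => (hcorr.mem_iff hsep h k).mpr) hta⟩

end Decomposition

theorem gfp_mem_iff_of_common_decomposition_general {C : Type} {arity : C → ℕ}
    {S Q : Type*} {ι κ : Type*}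
    (interpS : ∀ c : C, (Fin (arity c) → S) → S) (hsepS : Separated interpS)
    (interpQ : ∀ c : C, (Fin (arity c) → Q) → Q) (hsepQ : Separated interpQ)
    (Rules : Set (Σ _ : ι, Σ c : C, Fin (arity c) → ι ⊕ κ))
    (GS : κ → Set S) (GQ : κ → Set Q) (GA : κ → Set (PF C arity).M)
    (hcorrS : Corresponds interpS GS GA) (hcorrQ : Corresponds interpQ GQ GA)
    (t : (PF C arity).M) (a : S) (b : Q)
    (ha : IsDecomposition interpS t a) (hb : IsDecomposition interpQ t b) :
    ∀ i : ι, a ∈ OrderHom.gfp (ruleOp interpS Rules GS) i ↔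
      b ∈ OrderHom.gfp (ruleOp interpQ Rules GQ) i :=
  fun i => (ha.mem_gfp_ruleOp_iff hsepS hcorrS Rules i).trans
    (hb.mem_gfp_ruleOp_iff hsepQ hcorrQ Rules i).symm

/-- Corollary (coinductive case): elements of two separated `D`-correct structures with a
common decomposition have the same coinductive types. -/
theorem gfp_mem_iff_of_common_decomposition {C : Type} [Fintype C] {arity : C → ℕ}
    {S Q : Type*} {ι κ : Type*}
    (interpS : ∀ c : C, (Fin (arity c) → S) → S) (hsepS : Separated interpS)
    (interpQ : ∀ c : C, (Fin (arity c) → Q) → Q) (hsepQ : Separated interpQ)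
    (Rules : Set (Σ _ : ι, Σ c : C, Fin (arity c) → ι ⊕ κ))
    (GS : κ → Set S) (GQ : κ → Set Q) (GA : κ → Set (PF C arity).M)
    (hcorrS : Corresponds interpS GS GA) (hcorrQ : Corresponds interpQ GQ GA)
    (t : (PF C arity).M) (a : S) (b : Q)
    (ha : IsDecomposition interpS t a) (hb : IsDecomposition interpQ t b) :
    ∀ i : ι, a ∈ OrderHom.gfp (ruleOp interpS Rules GS) i ↔
      b ∈ OrderHom.gfp (ruleOp interpQ Rules GQ) i :=
  gfp_mem_iff_of_common_decomposition_general interpS hsepS interpQ hsepQ Rules GS GQ GA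
    hcorrS hcorrQ t a b ha hb
end
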